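/- Let r ≤ min(p, q) and let U ∈ ℂ^{p×r}, V ∈ ℂ^{q×r} have orthonormal columns (UᴴU = I_r and VᴴV = I_r). Then the linear map 𝓜 : Σ ↦ Σ − β Uᴴ(𝓗(𝓛(𝓗*(UΣVᴴ))))V on ℂ^{r×r} is positive definite with smallest eigenvalue at least α/(α + βm): for every Σ ∈ ℂ^{r×r}, Re tr(Σᴴ · 𝓜(Σ)) ≥ (α/(α + βm)) ‖Σ‖_F²; in particular 𝓜 is invertible. -/

import Mathlib

open scoped BigOperators

namespace LPPG

/-- The Hankel operator. -/
noncomputable def hankel (p q n : ℕ) (hn : p + q = n + 1) (x : Fin n → ℂ) :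
    Matrix (Fin p) (Fin q) ℂ :=
  fun i j => x ⟨i.1 + j.1, by have hi := i.2; have hj := j.2; omega⟩

/-- The adjoint `𝓗*` of the Hankel operator. -/
noncomputable def hankelAdj (p q n : ℕ) (X : Matrix (Fin p) (Fin q) ℂ) : Fin n → ℂ :=
  fun a => ∑ i : Fin p, ∑ j : Fin q, if (i : ℕ) + (j : ℕ) = (a : ℕ) then X i j else 0

/-- The antidiagonal count `w_a`. -/
def w (p q : ℕ) (a : ℕ) : ℕ :=
  (Finset.univ.filter (fun ij : Fin p × Fin q => (ij.1 : ℕ) + (ij.2 : ℕ) = a)).card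

/-- The entrywise operator `𝓛`. -/
noncomputable def Lop (p q n : ℕ) (α β : ℝ) (Ω : Finset (Fin n)) (x : Fin n → ℂ) : Fin n → ℂ :=
  fun a => x a / ((α : ℂ) + (if a ∈ Ω then 1 else 0) + (β : ℂ) * (w p q (a : ℕ) : ℂ))

/-- Real Frobenius inner product `Re tr(Aᴴ B)`. -/
noncomputable def frobInner (p' q' : ℕ) (A B : Matrix (Fin p') (Fin q') ℂ) : ℝ :=
  (∑ i : Fin p', ∑ j : Fin q', (starRingEnd ℂ) (A i j) * B i j).re

/-- The map `𝓜 : Σ ↦ Σ − β Uᴴ(𝓗(𝓛(𝓗*(UΣVᴴ))))V` on `ℂ^{r×r}`. -/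
noncomputable def Mop (p q n r : ℕ) (hn : p + q = n + 1) (α β : ℝ) (Ω : Finset (Fin n))
    (U : Matrix (Fin p) (Fin r) ℂ) (V : Matrix (Fin q) (Fin r) ℂ)
    (S : Matrix (Fin r) (Fin r) ℂ) : Matrix (Fin r) (Fin r) ℂ :=
  S - β • (U.conjTranspose
      * hankel p q n hn (Lop p q n α β Ω (hankelAdj p q n (U * S * V.conjTranspose)))
      * V)

/-!
Put `X = U Σ Vᴴ`. Since `U` and `V` have orthonormal columns, `‖X‖_F = ‖Σ‖_F`, and moving `U`, `V`
and `𝓗` across the inner product turns the quadratic form of `𝓜` into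
`‖X‖_F² − ∑ₐ β |(𝓗* X)ₐ|² / (α + χ_Ω(a) + β wₐ)`. By Cauchy–Schwarz on the `a`-th antidiagonal,
`|(𝓗* X)ₐ|²` is at most `wₐ` times the part of `‖X‖_F²` carried by that antidiagonal, so each
antidiagonal loses at most the fraction `β wₐ / (α + β wₐ) ≤ 1 − α / (α + β m)` of its mass.
-/

open Finset Matrix ComplexConjugate

section General

theorem norm_sum_sq_le_card_mul_sum_norm_sq {ι E : Type*} [SeminormedAddCommGroup E]
    (s : Finset ι) (f : ι → E) :
    ‖∑ i ∈ s, f i‖ ^ 2 ≤ #s * ∑ i ∈ s, ‖f i‖ ^ 2 :=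
  calc ‖∑ i ∈ s, f i‖ ^ 2 ≤ (∑ i ∈ s, ‖f i‖) ^ 2 := by gcongr; exact norm_sum_le s f
    _ ≤ #s * ∑ i ∈ s, ‖f i‖ ^ 2 := sq_sum_le_card_mul_sum_sq

theorem mul_div_add_mul_le_one_sub_div {α β x y : ℝ} (hα : 0 < α) (hβ : 0 ≤ β) (hx : 0 ≤ x)
    (hxy : x ≤ y) : β * x / (α + β * x) ≤ 1 - α / (α + β * y) :=
  calc β * x / (α + β * x) = 1 - α / (α + β * x) := by
        have hne : α + β * x ≠ 0 := by positivity
        rw [eq_sub_iff_add_eq, ← add_div, add_comm, div_self hne]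
    _ ≤ 1 - α / (α + β * y) := by gcongr

end General

section FrobeniusInner

variable {p q k l : ℕ}

theorem frobInner_eq_re_trace (A B : Matrix (Fin p) (Fin q) ℂ) :
    frobInner p q A B = (Aᴴ * B).trace.re := by
  unfold frobInner
  rw [sum_comm]
  simp [trace, mul_apply]

theorem frobInner_zero_right (A : Matrix (Fin p) (Fin q) ℂ) : frobInner p q A 0 = 0 := by
  simp [frobInner]

theorem frobInner_sub_right (A B C : Matrix (Fin p) (Fin q) ℂ) :
    frobInner p q A (B - C) = frobInner p q A B - frobInner p q A C := by
  simp only [frobInner_eq_re_trace, Matrix.mul_sub, trace_sub, Complex.sub_re]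

theorem frobInner_real_smul_right (c : ℝ) (A B : Matrix (Fin p) (Fin q) ℂ) :
    frobInner p q A (c • B) = c * frobInner p q A B := by
  simp only [frobInner_eq_re_trace, Matrix.mul_smul, trace_smul, Complex.smul_re, smul_eq_mul]

theorem frobInner_self (A : Matrix (Fin p) (Fin q) ℂ) :
    frobInner p q A A = ∑ i, ∑ j, ‖A i j‖ ^ 2 := by
  simp only [frobInner, Complex.conj_mul']
  norm_cast

theorem frobInner_self_pos {A : Matrix (Fin p) (Fin q) ℂ} (hA : A ≠ 0) :
    0 < frobInner p q A A := by
  obtain ⟨i, j, hij⟩ : ∃ i j, A i j ≠ 0 := by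
    contrapose! hA
    exact Matrix.ext hA
  rw [frobInner_self]
  refine sum_pos' (fun _ _ ↦ by positivity) ⟨i, mem_univ i, ?_⟩
  exact sum_pos' (fun _ _ ↦ by positivity) ⟨j, mem_univ j, by positivity⟩

theorem frobInner_conjTranspose_mul_mul (U : Matrix (Fin p) (Fin k) ℂ)
    (V : Matrix (Fin q) (Fin l) ℂ) (S : Matrix (Fin k) (Fin l) ℂ) (X : Matrix (Fin p) (Fin q) ℂ) :
    frobInner k l S (Uᴴ * X * V) = frobInner p q (U * S * Vᴴ) X := by
  simp only [frobInner_eq_re_trace, conjTranspose_mul, conjTranspose_conjTranspose]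
  rw [Matrix.mul_assoc V, trace_mul_comm V]
  simp only [Matrix.mul_assoc]

theorem frobInner_self_mul_mul_conjTranspose {U : Matrix (Fin p) (Fin k) ℂ}
    {V : Matrix (Fin q) (Fin l) ℂ} (hU : Uᴴ * U = 1) (hV : Vᴴ * V = 1)
    (S : Matrix (Fin k) (Fin l) ℂ) :
    frobInner p q (U * S * Vᴴ) (U * S * Vᴴ) = frobInner k l S S := by
  have cancel : Uᴴ * (U * S * Vᴴ) * V = S :=
    calc Uᴴ * (U * S * Vᴴ) * V = (Uᴴ * U) * S * (Vᴴ * V) := by simp only [Matrix.mul_assoc]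
      _ = S := by rw [hU, hV, Matrix.one_mul, Matrix.mul_one]
  rw [← frobInner_conjTranspose_mul_mul, cancel]

theorem bijective_of_frobInner_pos {f : Matrix (Fin p) (Fin q) ℂ → Matrix (Fin p) (Fin q) ℂ}
    (hf : IsLinearMap ℂ f) (hpos : ∀ A ≠ 0, 0 < frobInner p q A (f A)) :
    Function.Bijective f := by
  refine IsArtinian.bijective_of_injective_endomorphism (hf.mk' f) ?_
  refine (injective_iff_map_eq_zero (hf.mk' f)).mpr fun A (hA : f A = 0) ↦ ?_
  by_contra hne
  have := hpos A hne
  rw [hA, frobInner_zero_right] at this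
  exact this.false

end FrobeniusInner

section Antidiagonal

variable {p q n : ℕ}

/-- The positions on the `a`-th antidiagonal `i + j = a` of a `p × q` matrix. These are the fibres
over which `𝓗*` sums, and `w p q a` is by definition the cardinality of the `a`-th one. -/
def antidiag (p q a : ℕ) : Finset (Fin p × Fin q) :=
  {ij | (ij.1 : ℕ) + (ij.2 : ℕ) = a}

theorem mem_antidiag {a : ℕ} {ij : Fin p × Fin q} :
    ij ∈ antidiag p q a ↔ (ij.1 : ℕ) + (ij.2 : ℕ) = a := by
  simp [antidiag]

theorem card_antidiag (p q a : ℕ) : #(antidiag p q a) = w p q a := rfl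

theorem w_le_min (p q a : ℕ) : w p q a ≤ min p q := by
  rw [← card_antidiag]
  refine le_min ?_ ?_
  · have fst_injOn : Set.InjOn Prod.fst (antidiag p q a : Set (Fin p × Fin q)) := by
      intro x hx y hy hxy
      rw [mem_coe, mem_antidiag] at hx hy
      exact Prod.ext hxy (Fin.ext (by omega))
    simpa using card_le_card_of_injOn (t := univ) Prod.fst (fun _ _ ↦ mem_univ _) fst_injOn
  · have snd_injOn : Set.InjOn Prod.snd (antidiag p q a : Set (Fin p × Fin q)) := by
      intro x hx y hy hxy
      rw [mem_coe, mem_antidiag] at hx hy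
      exact Prod.ext (Fin.ext (by omega)) hxy
    simpa using card_le_card_of_injOn (t := univ) Prod.snd (fun _ _ ↦ mem_univ _) snd_injOn

theorem sum_sum_antidiag {M : Type*} [AddCommMonoid M] (hn : p + q ≤ n + 1)
    (f : Fin p × Fin q → M) :
    ∑ a : Fin n, ∑ ij ∈ antidiag p q a, f ij = ∑ ij, f ij := by
  let index (ij : Fin p × Fin q) : Fin n := ⟨ij.1 + ij.2, by omega⟩
  have antidiag_eq_fiber (a : Fin n) : antidiag p q a = ({ij | index ij = a} : Finset _) := by
    simp only [antidiag, index, Fin.ext_iff]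
  simp only [antidiag_eq_fiber, sum_fiberwise]

theorem hankelAdj_apply (X : Matrix (Fin p) (Fin q) ℂ) (a : Fin n) :
    hankelAdj p q n X a = ∑ ij ∈ antidiag p q a, X ij.1 ij.2 := by
  rw [hankelAdj, antidiag, sum_filter, Fintype.sum_prod_type]

theorem hankel_apply_of_mem_antidiag (hn : p + q = n + 1) (y : Fin n → ℂ) {a : Fin n}
    {ij : Fin p × Fin q} (hij : ij ∈ antidiag p q a) : hankel p q n hn y ij.1 ij.2 = y a :=
  congrArg y (Fin.ext (mem_antidiag.mp hij))

theorem norm_hankelAdj_apply_sq_le (X : Matrix (Fin p) (Fin q) ℂ) (a : Fin n) :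
    ‖hankelAdj p q n X a‖ ^ 2 ≤ w p q a * ∑ ij ∈ antidiag p q a, ‖X ij.1 ij.2‖ ^ 2 := by
  rw [hankelAdj_apply, ← card_antidiag]
  exact norm_sum_sq_le_card_mul_sum_norm_sq _ _

theorem frobInner_hankel (hn : p + q = n + 1) (X : Matrix (Fin p) (Fin q) ℂ) (y : Fin n → ℂ) :
    frobInner p q X (hankel p q n hn y) = ∑ a, (conj (hankelAdj p q n X a) * y a).re := by
  rw [frobInner, ← Fintype.sum_prod_type', ← sum_sum_antidiag hn.le, Complex.re_sum]
  refine sum_congr rfl fun a _ ↦ congrArg Complex.re ?_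
  rw [hankelAdj_apply, map_sum, sum_mul]
  exact sum_congr rfl fun ij hij ↦ by rw [hankel_apply_of_mem_antidiag hn y hij]

theorem frobInner_self_eq_sum_antidiag (hn : p + q ≤ n + 1) (X : Matrix (Fin p) (Fin q) ℂ) :
    frobInner p q X X = ∑ a : Fin n, ∑ ij ∈ antidiag p q a, ‖X ij.1 ij.2‖ ^ 2 := by
  rw [sum_sum_antidiag hn, frobInner_self, Fintype.sum_prod_type]

end Antidiagonal

section HankelForm

variable {p q n : ℕ} {α β : ℝ}

theorem re_conj_mul_Lop_apply (Ω : Finset (Fin n)) (x : Fin n → ℂ) (a : Fin n) :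
    (conj (x a) * Lop p q n α β Ω x a).re =
      ‖x a‖ ^ 2 / (α + (if a ∈ Ω then 1 else 0) + β * w p q a) := by
  rw [Lop, ← mul_div_assoc, Complex.conj_mul']
  split_ifs <;> norm_cast

theorem re_conj_mul_Lop_apply_le (hα : 0 < α) (hβ : 0 ≤ β) (Ω : Finset (Fin n)) (x : Fin n → ℂ)
    (a : Fin n) :
    (conj (x a) * Lop p q n α β Ω x a).re ≤ ‖x a‖ ^ 2 / (α + β * w p q a) := by
  rw [re_conj_mul_Lop_apply]
  gcongr
  split_ifs <;> linarith

theorem mul_frobInner_hankel_Lop_hankelAdj_le (hn : p + q = n + 1) (hα : 0 < α) (hβ : 0 ≤ β)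
    (Ω : Finset (Fin n)) (X : Matrix (Fin p) (Fin q) ℂ) :
    β * frobInner p q X (hankel p q n hn (Lop p q n α β Ω (hankelAdj p q n X))) ≤
      (1 - α / (α + β * min (p : ℝ) q)) * frobInner p q X X := by
  rw [frobInner_hankel, frobInner_self_eq_sum_antidiag hn.le, mul_sum, mul_sum]
  refine sum_le_sum fun a _ ↦ ?_
  have w_le : (w p q a : ℝ) ≤ min (p : ℝ) q := mod_cast w_le_min p q a
  set mass := ∑ ij ∈ antidiag p q a, ‖X ij.1 ij.2‖ ^ 2
  calc β * (conj (hankelAdj p q n X a) * Lop p q n α β Ω (hankelAdj p q n X) a).re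
      ≤ β * (‖hankelAdj p q n X a‖ ^ 2 / (α + β * w p q a)) := by
        gcongr
        exact re_conj_mul_Lop_apply_le hα hβ Ω _ a
    _ ≤ β * (w p q a * mass / (α + β * w p q a)) := by
        gcongr
        exact norm_hankelAdj_apply_sq_le X a
    _ = β * w p q a / (α + β * w p q a) * mass := by ring
    _ ≤ (1 - α / (α + β * min (p : ℝ) q)) * mass := by
        gcongr
        exact mul_div_add_mul_le_one_sub_div hα hβ (Nat.cast_nonneg _) w_le

end HankelForm

section Linearity

variable {p q n r : ℕ}

theorem isLinearMap_hankel (hn : p + q = n + 1) : IsLinearMap ℂ (hankel p q n hn) :=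
  ⟨fun _ _ ↦ rfl, fun _ _ ↦ rfl⟩

theorem isLinearMap_hankelAdj : IsLinearMap ℂ (hankelAdj p q n) where
  map_add X Y := by
    ext a
    simp only [hankelAdj_apply, Pi.add_apply, Matrix.add_apply, sum_add_distrib]
  map_smul c X := by
    ext a
    simp only [hankelAdj_apply, Pi.smul_apply, Matrix.smul_apply, smul_sum]

theorem isLinearMap_Lop (α β : ℝ) (Ω : Finset (Fin n)) : IsLinearMap ℂ (Lop p q n α β Ω) where
  map_add x y := by
    ext a
    simp only [Lop, Pi.add_apply, add_div]
  map_smul c x := by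
    ext a
    simp only [Lop, Pi.smul_apply, smul_eq_mul, mul_div_assoc]

theorem isLinearMap_Mop (hn : p + q = n + 1) (α β : ℝ) (Ω : Finset (Fin n))
    (U : Matrix (Fin p) (Fin r) ℂ) (V : Matrix (Fin q) (Fin r) ℂ) :
    IsLinearMap ℂ (Mop p q n r hn α β Ω U V) where
  map_add S T := by
    simp only [Mop, Matrix.mul_add, Matrix.add_mul, isLinearMap_hankelAdj.map_add,
      (isLinearMap_Lop α β Ω).map_add, (isLinearMap_hankel hn).map_add, smul_add]
    abel
  map_smul c S := by
    simp only [Mop, Matrix.mul_smul, Matrix.smul_mul, isLinearMap_hankelAdj.map_smul,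
      (isLinearMap_Lop α β Ω).map_smul, (isLinearMap_hankel hn).map_smul, smul_sub]
    rw [smul_comm]

end Linearity

section LowerBound

variable {p q n r : ℕ} {α β : ℝ}

theorem frobInner_Mop (hn : p + q = n + 1) (Ω : Finset (Fin n)) (U : Matrix (Fin p) (Fin r) ℂ)
    (V : Matrix (Fin q) (Fin r) ℂ) (S : Matrix (Fin r) (Fin r) ℂ) :
    frobInner r r S (Mop p q n r hn α β Ω U V S) =
      frobInner r r S S - β * frobInner p q (U * S * Vᴴ)
        (hankel p q n hn (Lop p q n α β Ω (hankelAdj p q n (U * S * Vᴴ)))) := by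
  rw [Mop, frobInner_sub_right, frobInner_real_smul_right, frobInner_conjTranspose_mul_mul]

theorem mul_frobInner_self_le_frobInner_Mop (hn : p + q = n + 1) (hα : 0 < α) (hβ : 0 ≤ β)
    (Ω : Finset (Fin n)) {U : Matrix (Fin p) (Fin r) ℂ} {V : Matrix (Fin q) (Fin r) ℂ}
    (hU : Uᴴ * U = 1) (hV : Vᴴ * V = 1) (S : Matrix (Fin r) (Fin r) ℂ) :
    α / (α + β * min (p : ℝ) q) * frobInner r r S S ≤
      frobInner r r S (Mop p q n r hn α β Ω U V S) := by
  have hankel_le := mul_frobInner_hankel_Lop_hankelAdj_le hn hα hβ Ω (U * S * Vᴴ)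
  rw [frobInner_self_mul_mul_conjTranspose hU hV] at hankel_le
  rw [frobInner_Mop]
  linarith

end LowerBound

/-- if `U, V` have orthonormal columns and `r ≤ min(p,q)`, then
`𝓜` is positive definite with smallest eigenvalue at least `α/(α + βm)`:
`Re tr(Σᴴ 𝓜(Σ)) ≥ (α/(α + βm))‖Σ‖_F²` for every `Σ`; in particular `𝓜` is
invertible. -/
theorem Mop_positive_definite
    (p q n r : ℕ) (hp : 0 < p) (hq : 0 < q) (hn : p + q = n + 1)
    (hr : r ≤ min p q)
    (α β : ℝ) (hα : 0 < α) (hβ : 0 < β) (Ω : Finset (Fin n))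
    (U : Matrix (Fin p) (Fin r) ℂ) (V : Matrix (Fin q) (Fin r) ℂ)
    (hU : U.conjTranspose * U = 1) (hV : V.conjTranspose * V = 1) :
    (∀ S : Matrix (Fin r) (Fin r) ℂ,
        (α / (α + β * (min p q : ℝ))) * ∑ i : Fin r, ∑ j : Fin r, ‖S i j‖ ^ 2
          ≤ frobInner r r S (Mop p q n r hn α β Ω U V S)) ∧
    Function.Bijective (Mop p q n r hn α β Ω U V) := by
  have lower_bound := mul_frobInner_self_le_frobInner_Mop hn hα hβ.le Ω hU hV
  refine ⟨fun S ↦ ?_, bijective_of_frobInner_pos (isLinearMap_Mop hn α β Ω U V) fun S hS ↦ ?_⟩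
  · rw [← frobInner_self]
    exact lower_bound S
  · have const_pos : 0 < α / (α + β * min (p : ℝ) q) := by positivity
    exact (mul_pos const_pos (frobInner_self_pos hS)).trans_le (lower_bound S)

end LPPG
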